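/- arXiv:1002.0047 — 10 statements merged into one kernel-verified Lean document; each statement's English description precedes it below -/
import Mathlib

section
/- Let G be a group acting by automorphisms on an abelian group A, and let H = A ⋊ G be the semidirect product with multiplication (a,g)(a',g') = (a + g·a', gg'). Let T be the circle group, let Â = Hom(A, T) be the character group with G-action (g·χ)(a) = χ(g⁻¹·a). Let m₀ : G × G → T be a normalized 2-cocycle (i.e. m₀(g₁,g₂)·m₀(g₁g₂,g₃) = m₀(g₂,g₃)·m₀(g₁,g₂g₃) and m₀(1,g) = m₀(g,1) = 1), and let θ : G → Â be a 1-cocycle (i.e. θ(gg') = θ(g)·(g·θ(g'))). Then the function m defined by m((a,g),(a',g')) = m₀(g,g')·θ(g⁻¹)(a') is a normalized 2-cocycle (multiplier) on H. -/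
/-- Given a normalized 2-cocycle `m₀` of `G` with values in the circle group and a 1-cocycle
`θ : G → Â` (each `θ g` a character of `A`, with `θ(gg') = θ(g)·(g·θ(g'))` where
`(g·χ)(a) = χ(g⁻¹·a)`), the function `m((a,g),(a',g')) = m₀(g,g')·θ(g⁻¹)(a')` is a
normalized 2-cocycle (multiplier) on the semidirect product `H = A ⋊ G`, whose
multiplication is `(a,g)(a',g') = (a + g·a', gg')`. -/
theorem stmt_1 {G A : Type*} [Group G] [AddCommGroup A] [DistribMulAction G A]
    (m₀ : G → G → Circle) (θ : G → A → Circle)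
    (hm₀coc : ∀ g₁ g₂ g₃ : G, m₀ g₁ g₂ * m₀ (g₁ * g₂) g₃ = m₀ g₂ g₃ * m₀ g₁ (g₂ * g₃))
    (hm₀l : ∀ g : G, m₀ 1 g = 1) (hm₀r : ∀ g : G, m₀ g 1 = 1)
    (hθchar : ∀ (g : G) (a a' : A), θ g (a + a') = θ g a * θ g a')
    (hθcoc : ∀ (g g' : G) (a : A), θ (g * g') a = θ g a * θ g' (g⁻¹ • a)) :
    ∀ (mul : A × G → A × G → A × G) (m : A × G → A × G → Circle),
      (mul = fun x y => (x.1 + x.2 • y.1, x.2 * y.2)) →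
      (m = fun x y => m₀ x.2 y.2 * θ x.2⁻¹ y.1) →
      (∀ x y z : A × G, m x y * m (mul x y) z = m y z * m x (mul y z)) ∧
        (∀ x : A × G, m ((0 : A), (1 : G)) x = 1) ∧
        (∀ x : A × G, m x ((0 : A), (1 : G)) = 1) := by
  rintro mul m rfl rfl
  refine ⟨?_, ?_, ?_⟩
  · rintro ⟨a, g⟩ ⟨b, h⟩ ⟨c, k⟩
    simp only [mul_inv_rev, hθcoc, hθchar, inv_inv]
    calc m₀ g h * θ g⁻¹ b * (m₀ (g * h) k * (θ h⁻¹ c * θ g⁻¹ (h • c)))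
        = (m₀ g h * m₀ (g * h) k) * (θ g⁻¹ b * (θ h⁻¹ c * θ g⁻¹ (h • c))) :=
          mul_mul_mul_comm _ _ _ _
      _ = (m₀ h k * m₀ g (h * k)) * (θ h⁻¹ c * (θ g⁻¹ b * θ g⁻¹ (h • c))) := by
          rw [hm₀coc, mul_left_comm (θ g⁻¹ b)]
      _ = _ := mul_mul_mul_comm _ _ _ _
  · rintro ⟨a, g⟩
    have h := hθcoc 1 1 a
    simp only [mul_one, inv_one, one_smul] at h
    simp only [hm₀l, inv_one, one_mul]
    exact left_eq_mul.mp h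
  · rintro ⟨a, g⟩
    have h := hθchar g⁻¹ 0 0
    rw [add_zero] at h
    simp only [hm₀r, one_mul]
    exact left_eq_mul.mp h
end

section
/- Let (V, B) be a finite-dimensional vector space over ℚ_p with a nondegenerate symmetric bilinear form B and dim V ≥ 3. If B' is an alternating bilinear form on V that is invariant under SO(V), i.e. B'(gx, gy) = B'(x, y) for all g ∈ SO(V) and x, y ∈ V, then B' = 0. -/
/-- Over `ℚ_p`, if `B` is a nondegenerate symmetric bilinear form on a finite-dimensional
space `V` with `dim V ≥ 3`, then any alternating bilinear form `B'` on `V` invariant under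
`SO(V)` vanishes. -/
theorem stmt_5 (p : ℕ) [Fact p.Prime] {V : Type*} [AddCommGroup V] [Module ℚ_[p] V]
    [FiniteDimensional ℚ_[p] V] (hdim : 3 ≤ Module.finrank ℚ_[p] V)
    (B B' : LinearMap.BilinForm ℚ_[p] V)
    (hsymm : ∀ x y, B x y = B y x)
    (hnd : ∀ x, (∀ y, B x y = 0) → x = 0)
    (halt : ∀ x, B' x x = 0)
    (hinv : ∀ g : V ≃ₗ[ℚ_[p]] V, (∀ x y, B (g x) (g y) = B x y) →
      LinearMap.det g.toLinearMap = 1 → ∀ x y, B' (g x) (g y) = B' x y) :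
    B' = 0 := by
  classical
  haveI : Invertible (2 : ℚ_[p]) := invertibleOfNonzero two_ne_zero
  obtain ⟨v, hv⟩ := LinearMap.BilinForm.exists_orthogonal_basis (B := B) ⟨hsymm⟩
  have hv' : ∀ i j, i ≠ j → B (v i) (v j) = 0 := fun i j h => hv h
  refine v.ext fun i => v.ext fun j => ?_
  by_cases hij : i = j
  · subst hij
    simpa using halt (v i)
  obtain ⟨k, hk⟩ : ∃ k, k ∉ ({i, j} : Finset (Fin (Module.finrank ℚ_[p] V))) := by
    by_contra! h
    have h1 : (Finset.univ : Finset (Fin (Module.finrank ℚ_[p] V))) ⊆ {i, j} := fun x _ => h x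
    have h2 := Finset.card_le_card h1
    have h3 := Finset.card_le_two (a := i) (b := j)
    rw [Finset.card_univ, Fintype.card_fin] at h2
    omega
  have hki : k ≠ i := by rintro rfl; simp at hk
  have hkj : k ≠ j := by rintro rfl; simp at hk
  let d : Fin (Module.finrank ℚ_[p] V) → ℚ_[p] :=
    fun l => (if l = i then -1 else 1) * (if l = k then -1 else 1)
  have hd : ∀ l, d l * d l = 1 := by
    intro l
    simp only [d]
    split_ifs <;> norm_num
  let f : V →ₗ[ℚ_[p]] V := v.constr ℚ_[p] fun l => d l • v l
  have hf : ∀ l, f (v l) = d l • v l := fun l => v.constr_basis ℚ_[p] _ l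
  have hff : ∀ x, f (f x) = x := by
    have : f ∘ₗ f = LinearMap.id := v.ext fun l => by
      simp [hf, smul_smul, hd]
    exact fun x => LinearMap.congr_fun this x
  have hdet : LinearMap.det f = 1 := by
    rw [← LinearMap.det_toMatrix v]
    have : LinearMap.toMatrix v v f = Matrix.diagonal d := by
      ext a b
      rw [LinearMap.toMatrix_apply, hf, Matrix.diagonal_apply]
      by_cases hab : a = b
      · subst hab; simp
      · simp [hab, Finsupp.single_apply, Ne.symm hab]
    rw [this, Matrix.det_diagonal]
    simp only [d]
    rw [Finset.prod_mul_distrib, Finset.prod_ite_eq', Finset.prod_ite_eq']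
    simp
  have hB : ∀ x y, B (f x) (f y) = B x y := by
    have : B.compl₁₂ f f = B := v.ext fun a => v.ext fun b => by
      simp only [LinearMap.compl₁₂_apply, hf, map_smul, LinearMap.smul_apply, smul_eq_mul]
      by_cases hab : a = b
      · subst hab
        rw [← mul_assoc, hd, one_mul]
      · simp [hv' a b hab]
    exact fun x y => LinearMap.congr_fun₂ this x y
  have key := hinv (LinearEquiv.ofInvolutive f hff) hB hdet (v i) (v j)
  have key2 : B' (f (v i)) (f (v j)) = B' (v i) (v j) := key
  have hdi : d i = -1 := by simp [d, hki.symm]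
  have hdj : d j = 1 := by simp [d, hkj.symm, Ne.symm hij]
  rw [hf, hf, hdi, hdj] at key2
  simp only [map_smul, LinearMap.smul_apply, smul_eq_mul] at key2
  simp only [LinearMap.zero_apply]
  linear_combination (-1/2 : ℚ_[p]) * key2
end

section
/- Let k be a field of characteristic ≠ 2, (V₀, (·,·)) a finite-dimensional vector space over k with a nondegenerate symmetric bilinear form, and fix τ ∈ k with τ ≠ 0. Consider the affine action of R = V₀ ⋊ SO(V₀) on V₀ × k given by (v,W)·(ξ,t) = (Wξ + 2τv, t − (Wξ, v) − τ(v,v)). Then: (i) the function M(ξ,t) = (ξ,ξ) + 4τt is invariant under this action; (ii) for every a ∈ k, the level set {(ξ,t) : (ξ,ξ) + 4τt = a} is a single orbit of this action. -/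
/-- For `τ ≠ 0`, the affine action `(v,W)·(ξ,t) = (Wξ + 2τv, t − (Wξ,v) − τ(v,v))` of
`R = V₀ ⋊ SO(V₀)` on `V₀ × k`: (i) preserves `M(ξ,t) = (ξ,ξ) + 4τt`; (ii) each level set
`{(ξ,t) : (ξ,ξ) + 4τt = a}` is a single orbit. -/
theorem stmt_7 {k V₀ : Type*} [Field k] [AddCommGroup V₀] [Module k V₀]
    [FiniteDimensional k V₀] (hchar : (2 : k) ≠ 0)
    (B : LinearMap.BilinForm k V₀)
    (hsymm : ∀ x y, B x y = B y x)
    (hnd : ∀ x, (∀ y, B x y = 0) → x = 0)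
    (τ : k) (hτ : τ ≠ 0) :
    -- (i) invariance of M(ξ,t) = (ξ,ξ) + 4τt under the affine action
    (∀ (v : V₀) (W : V₀ ≃ₗ[k] V₀),
      (∀ x y, B (W x) (W y) = B x y) → LinearMap.det W.toLinearMap = 1 →
      ∀ (ξ : V₀) (t : k),
        B (W ξ + (2 * τ) • v) (W ξ + (2 * τ) • v)
            + 4 * τ * (t - B (W ξ) v - τ * B v v) =
          B ξ ξ + 4 * τ * t) ∧
    -- (ii) each level set is a single orbit
    (∀ (a : k) (ξ : V₀) (t : k) (ξ' : V₀) (t' : k),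
      B ξ ξ + 4 * τ * t = a → B ξ' ξ' + 4 * τ * t' = a →
      ∃ (v : V₀) (W : V₀ ≃ₗ[k] V₀),
        (∀ x y, B (W x) (W y) = B x y) ∧ LinearMap.det W.toLinearMap = 1 ∧
        ((W ξ + (2 * τ) • v, t - B (W ξ) v - τ * B v v) : V₀ × k) = (ξ', t')) := by
  have key : ∀ (v : V₀) (W : V₀ ≃ₗ[k] V₀),
      (∀ x y, B (W x) (W y) = B x y) → 
      ∀ (ξ : V₀) (t : k),
        B (W ξ + (2 * τ) • v) (W ξ + (2 * τ) • v)
            + 4 * τ * (t - B (W ξ) v - τ * B v v) =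
          B ξ ξ + 4 * τ * t := by
    intro v W hW ξ t
    simp only [map_add, LinearMap.add_apply, map_smul, LinearMap.smul_apply, smul_eq_mul, hW]
    rw [hsymm v (W ξ)]
    ring
  refine ⟨fun v W hW _ => key v W hW, ?_⟩
  intro a ξ t ξ' t' h h'
  have h2τ : 2 * τ ≠ 0 := mul_ne_zero hchar hτ
  have h4τ : 4 * τ ≠ 0 := by
    have : 4 * τ = 2 * (2 * τ) := by ring
    rw [this]
    exact mul_ne_zero hchar h2τ
  have hk := key ((2 * τ)⁻¹ • (ξ' - ξ)) (LinearEquiv.refl k V₀) (fun _ _ => rfl) ξ t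
  have e : (LinearEquiv.refl k V₀) ξ + (2 * τ) • ((2 * τ)⁻¹ • (ξ' - ξ)) = ξ' := by
    rw [smul_inv_smul₀ h2τ]
    simp
  refine ⟨(2 * τ)⁻¹ • (ξ' - ξ), LinearEquiv.refl k V₀, fun _ _ => rfl, ?_, ?_⟩
  · exact LinearMap.det_id
  · rw [e] at hk
    refine Prod.ext e (mul_left_cancel₀ h4τ ?_)
    have := hk.trans (h.trans h'.symm)
    exact add_left_cancel this
end

section
/- Let k be a field of characteristic ≠ 2 and (V₀, (·,·)) a finite-dimensional vector space over k with a nondegenerate symmetric bilinear form, with dim V₀ ≥ 3. Consider the action of R = V₀ ⋊ SO(V₀) on V₀ × k given by (v,W)·(ξ,t) = (Wξ, t − (Wξ, v)). Then for every a ∈ k with a ≠ 0, the level set {(ξ,t) ∈ V₀ × k : (ξ,ξ) = a} is a single orbit of this action. -/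
theorem refl_aux {k V₀ : Type*} [Field k] [AddCommGroup V₀] [Module k V₀]
    [FiniteDimensional k V₀]
    (B : LinearMap.BilinForm k V₀) (hsymm : ∀ x y, B x y = B y x)
    (u : V₀) (hu : B u u ≠ 0) :
    ∃ W : V₀ ≃ₗ[k] V₀, (∀ x y, B (W x) (W y) = B x y) ∧
      LinearMap.det W.toLinearMap = -1 ∧ ∀ x, W x = x - (2 * B u x / B u u) • u := by
  have h : ((2 / B u u) • B u) u = 2 := by
    simp only [LinearMap.smul_apply, smul_eq_mul]
    field_simp
  have hW : ∀ x, Module.reflection h x = x - (2 * B u x / B u u) • u := by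
    intro x
    rw [Module.reflection_apply]
    simp only [LinearMap.smul_apply, smul_eq_mul]
    congr 2
    ring
  refine ⟨Module.reflection h, ?_, ?_, hW⟩
  · intro x y
    rw [hW, hW]
    simp only [map_sub, map_smul, LinearMap.sub_apply, LinearMap.smul_apply, smul_eq_mul]
    rw [hsymm x u]
    field_simp
    ring
  · have : (Module.reflection h).toLinearMap
        = LinearMap.transvection ((2 / B u u) • B u) (-u) := by
      ext x
      simp [Module.reflection_apply, LinearMap.transvection.apply, sub_eq_add_neg]
    rw [this, LinearMap.transvection.det, map_neg, h]
    norm_num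

theorem aniso_aux {k V₀ : Type*} [Field k] [AddCommGroup V₀] [Module k V₀]
    [FiniteDimensional k V₀] (hchar : (2 : k) ≠ 0)
    (B : LinearMap.BilinForm k V₀) (hsymm : ∀ x y, B x y = B y x)
    (hnd : ∀ x, (∀ y, B x y = 0) → x = 0)
    (hdim : 3 ≤ Module.finrank k V₀) (u : V₀) (hu : B u u ≠ 0) :
    ∃ w, B u w = 0 ∧ B w w ≠ 0 := by
  by_contra hcon
  push Not at hcon
  have hk : LinearMap.ker (B u) ≠ ⊥ := by
    intro hb
    have h1 := LinearMap.finrank_range_add_finrank_ker (B u)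
    rw [hb, finrank_bot] at h1
    have h2 := Submodule.finrank_le (LinearMap.range (B u))
    rw [Module.finrank_self] at h2
    omega
  obtain ⟨w, hw, hw0⟩ := Submodule.exists_mem_ne_zero_of_ne_bot hk
  rw [LinearMap.mem_ker] at hw
  apply hw0
  apply hnd
  intro y
  set z := y - (B u y / B u u) • u with hz
  have huz : B u z = 0 := by
    simp only [hz, map_sub, map_smul, smul_eq_mul]
    field_simp
    ring
  have h3 := hcon (w + z) (by rw [map_add, hw, huz, add_zero])
  simp only [map_add, LinearMap.add_apply] at h3
  rw [hcon w hw, hcon z huz, hsymm z w] at h3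
  have h4 : B w z = 0 := by
    have : 2 * B w z = 0 := by linear_combination h3
    exact (mul_eq_zero.mp this).resolve_left hchar
  have h5 : y = z + (B u y / B u u) • u := by rw [hz]; abel
  rw [h5, map_add, h4, map_smul, hsymm w u, hw]
  simp


/-- For the ordinary action `(v,W)·(ξ,t) = (Wξ, t − (Wξ,v))` of `R = V₀ ⋊ SO(V₀)` on
`V₀ × k` with `dim V₀ ≥ 3`, each level set `{(ξ,t) : (ξ,ξ) = a}` with `a ≠ 0` is a single
orbit. -/
theorem stmt_8 {k V₀ : Type*} [Field k] [AddCommGroup V₀] [Module k V₀]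
    [FiniteDimensional k V₀] (hchar : (2 : k) ≠ 0)
    (B : LinearMap.BilinForm k V₀)
    (hsymm : ∀ x y, B x y = B y x)
    (hnd : ∀ x, (∀ y, B x y = 0) → x = 0)
    (hdim : 3 ≤ Module.finrank k V₀)
    (a : k) (ha : a ≠ 0) :
    ∀ (ξ : V₀) (t : k) (ξ' : V₀) (t' : k), B ξ ξ = a → B ξ' ξ' = a →
      ∃ (v : V₀) (W : V₀ ≃ₗ[k] V₀),
        (∀ x y, B (W x) (W y) = B x y) ∧ LinearMap.det W.toLinearMap = 1 ∧
        ((W ξ, t - B (W ξ) v) : V₀ × k) = (ξ', t') := by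
  intro ξ t ξ' t' h h'
  obtain ⟨W, hW1, hW2, hW3⟩ : ∃ W : V₀ ≃ₗ[k] V₀, (∀ x y, B (W x) (W y) = B x y) ∧
      LinearMap.det W.toLinearMap = 1 ∧ W ξ = ξ' := by
    suffices H : ∃ W1 W2 : V₀ ≃ₗ[k] V₀, (∀ x y, B (W1 x) (W1 y) = B x y) ∧
        LinearMap.det W1.toLinearMap = -1 ∧ (∀ x y, B (W2 x) (W2 y) = B x y) ∧
        LinearMap.det W2.toLinearMap = -1 ∧ W2 (W1 ξ) = ξ' by
      obtain ⟨W1, W2, a1, a2, b1, b2, c⟩ := H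
      refine ⟨W1.trans W2, ?_, ?_, c⟩
      · intro x y
        simp [a1, b1]
      · rw [LinearEquiv.coe_trans, LinearMap.det_comp, a2, b2]
        norm_num
    have h'0 : B ξ' ξ' ≠ 0 := by rwa [h']
    by_cases hu : B (ξ - ξ') (ξ - ξ') = 0
    · have hu' : 2 * B ξ ξ' = 2 * a := by
        simp only [map_sub, LinearMap.sub_apply] at hu
        rw [hsymm ξ' ξ, h, h'] at hu
        linear_combination -hu
      have hb : B ξ ξ' = a := mul_left_cancel₀ hchar hu'
      have hs : B (ξ + ξ') (ξ + ξ') = 2 * 2 * a := by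
        simp only [map_add, LinearMap.add_apply]
        rw [hsymm ξ' ξ, h, h', hb]
        ring
      have hs0 : B (ξ + ξ') (ξ + ξ') ≠ 0 := by
        rw [hs]; exact mul_ne_zero (mul_ne_zero hchar hchar) ha
      obtain ⟨W1, a1, a2, a3⟩ := refl_aux B hsymm _ hs0
      obtain ⟨W2, b1, b2, b3⟩ := refl_aux B hsymm _ h'0
      refine ⟨W1, W2, a1, a2, b1, b2, ?_⟩
      have e1 : W1 ξ = -ξ' := by
        rw [a3, hs, map_add, LinearMap.add_apply, hsymm ξ' ξ, h, hb]
        have : 2 * (a + a) / (2 * 2 * a) = 1 := by field_simp; ring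
        rw [this, one_smul]; abel
      rw [e1, map_neg, b3]
      have : 2 * B ξ' ξ' / B ξ' ξ' = 2 := by field_simp
      rw [this, two_smul]; abel
    · obtain ⟨w, hw, hw0⟩ := aniso_aux hchar B hsymm hnd hdim ξ' h'0
      obtain ⟨W1, a1, a2, a3⟩ := refl_aux B hsymm _ hu
      obtain ⟨W2, b1, b2, b3⟩ := refl_aux B hsymm _ hw0
      refine ⟨W1, W2, a1, a2, b1, b2, ?_⟩
      have e1 : W1 ξ = ξ' := by
        rw [a3]
        have : 2 * B (ξ - ξ') ξ / B (ξ - ξ') (ξ - ξ') = 1 := by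
          rw [div_eq_one_iff_eq hu]
          simp only [map_sub, LinearMap.sub_apply]
          rw [hsymm ξ' ξ, h, h']
          ring
        rw [this, one_smul]; abel
      rw [e1, b3, hsymm w, hw]
      simp
  refine ⟨((t - t') / a) • ξ', W, hW1, hW2, ?_⟩
  rw [hW3, map_smul, h', smul_eq_mul, div_mul_cancel₀ _ ha, sub_sub_cancel]
end

section
/- Let k be a field of characteristic ≠ 2, (W, B_W) a finite-dimensional vector space over k with a nondegenerate symmetric bilinear form, and let V = kp ⊕ kq ⊕ W carry the symmetric bilinear form B extending B_W with B(p,p) = B(q,q) = 0, B(p,q) = 1, and p, q orthogonal to W. Then the map (t,R) ↦ h(t,R) is a group isomorphism from the Poincaré group P_W = W ⋊ SO(W), with multiplication (t,R)(t',R') = (t + Rt', RR'), onto the stabilizer H_p = {g ∈ SO(V) : g p = p} of the null vector p in SO(V). -/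
namespace ConformalModel

variable {k W : Type*} [Field k] [AddCommGroup W] [Module k W]

/-- The bilinear form on `V = kp ⊕ kq ⊕ W`, realized as `k × k × W` with `p = (1,0,0)` and
`q = (0,1,0)`: `B((a,b,w),(a',b',w')) = a b' + b a' + B_W(w,w')`. -/
def Bext (BW : LinearMap.BilinForm k W) : LinearMap.BilinForm k (k × k × W) :=
  LinearMap.mk₂ k (fun x y => x.1 * y.2.1 + x.2.1 * y.1 + BW x.2.2 y.2.2)
    (by intro m₁ m₂ n; simp; ring)
    (by intro c m n; simp; ring)
    (by intro m n₁ n₂; simp; ring)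
    (by intro c m n; simp; ring)

/-- The distinguished null vector `p`. -/
def pVec : k × k × W := (1, 0, 0)

/-- The linear map `h(t,R)` of `V = kp ⊕ kq ⊕ W`, determined by `h(t,R)p = p`,
`h(t,R)q = −(B(t,t)/2)p + q + t`, `h(t,R)w = −B(t,Rw)p + Rw`. -/
def hMap (BW : LinearMap.BilinForm k W) (t : W) (R : W →ₗ[k] W) :
    (k × k × W) →ₗ[k] (k × k × W) where
  toFun x := (x.1 - x.2.1 * (BW t t / 2) - BW t (R x.2.2), x.2.1, x.2.1 • t + R x.2.2)
  map_add' x y := by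
    refine Prod.ext ?_ (Prod.ext ?_ ?_)
    · simp; ring
    · simp
    · simp [add_smul]; abel
  map_smul' c x := by
    refine Prod.ext ?_ (Prod.ext ?_ ?_)
    · simp; ring
    · simp
    · simp [mul_smul, smul_add]

/-- The dilation `c̃` with `c̃ p = c p`, `c̃ q = c⁻¹ q`, `c̃ w = w`. -/
def cTilde (c : k) : (k × k × W) →ₗ[k] (k × k × W) where
  toFun x := (c * x.1, c⁻¹ * x.2.1, x.2.2)
  map_add' x y := by
    refine Prod.ext ?_ (Prod.ext ?_ ?_) <;> simp <;> ring
  map_smul' r x := by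
    refine Prod.ext ?_ (Prod.ext ?_ ?_) <;> simp <;> ring

/-- The section `J₀ : W → V`, `J₀(w) = −(B(w,w)/2)p + q + w`. -/
def J0 (BW : LinearMap.BilinForm k W) (w : W) : k × k × W := (-(BW w w / 2), 1, w)

/-- Membership in the special orthogonal group of a bilinear form, for a linear
endomorphism: it is bijective, preserves the form, and has determinant 1. -/
def IsSO {V : Type*} [AddCommGroup V] [Module k V] (B : LinearMap.BilinForm k V)
    (g : V →ₗ[k] V) : Prop :=
  Function.Bijective g ∧ (∀ x y, B (g x) (g y) = B x y) ∧ LinearMap.det g = 1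

theorem hMap_apply (BW : LinearMap.BilinForm k W) (t : W) (R : W →ₗ[k] W) (a b : k) (w : W) :
    hMap BW t R (a, b, w) = (a - b * (BW t t / 2) - BW t (R w), b, b • t + R w) := rfl

theorem Bext_apply (BW : LinearMap.BilinForm k W) (x y : k × k × W) :
    Bext BW x y = x.1 * y.2.1 + x.2.1 * y.1 + BW x.2.2 y.2.2 := rfl

theorem cTilde_apply (c a b : k) (w : W) :
    cTilde c (a, b, w) = (c * a, c⁻¹ * b, w) := rfl

theorem bij_of_det {V : Type*} [AddCommGroup V] [Module k V] [FiniteDimensional k V]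
    (g : V →ₗ[k] V) (h : LinearMap.det g = 1) : Function.Bijective g := by
  have : IsUnit g := by
    rw [LinearMap.isUnit_iff_isUnit_det, h]; exact isUnit_one
  exact (Module.End.isUnit_iff g).1 this

theorem hMap_comp (hchar : (2 : k) ≠ 0) (BW : LinearMap.BilinForm k W)
    (hsymm : ∀ x y, BW x y = BW y x) (t t' : W) (R R' : W →ₗ[k] W)
    (hR : ∀ x y, BW (R x) (R y) = BW x y) :
    (hMap BW t R) ∘ₗ (hMap BW t' R') = hMap BW (t + R t') (R ∘ₗ R') := by
  refine LinearMap.ext ?_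
  rintro ⟨a, b, w⟩
  rw [LinearMap.comp_apply, hMap_apply, hMap_apply, hMap_apply]
  refine Prod.ext ?_ (Prod.ext rfl ?_)
  · simp [hR, hsymm (R t') t]
    field_simp
    ring
  · simp [add_assoc]

theorem det_hMap_id [FiniteDimensional k W] (hchar : (2 : k) ≠ 0) (BW : LinearMap.BilinForm k W)
    (hsymm : ∀ x y, BW x y = BW y x) (t : W) :
    LinearMap.det (hMap BW t LinearMap.id) = 1 := by
  have hc := fun t t' => hMap_comp hchar BW hsymm t t' LinearMap.id LinearMap.id (fun _ _ => rfl)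
  have h0 : hMap BW 0 LinearMap.id = LinearMap.id := by
    refine LinearMap.ext ?_
    rintro ⟨a, b, w⟩
    simp [hMap_apply]
  have h1 : LinearMap.det (hMap BW t LinearMap.id) * LinearMap.det (hMap BW (-t) LinearMap.id)
      = 1 := by
    rw [← LinearMap.det_comp, hc]; simp [h0]
  have h2 : LinearMap.det (hMap BW t LinearMap.id) * LinearMap.det (hMap BW t LinearMap.id)
      = LinearMap.det (hMap BW (t + t) LinearMap.id) := by
    rw [← LinearMap.det_comp, hc]; simp
  have h3 : cTilde 2 ∘ₗ hMap BW t LinearMap.id ∘ₗ cTilde (2 : k)⁻¹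
      = hMap BW (t + t) LinearMap.id := by
    refine LinearMap.ext ?_
    rintro ⟨a, b, w⟩
    simp only [LinearMap.comp_apply, hMap_apply, cTilde_apply]
    refine Prod.ext ?_ (Prod.ext ?_ ?_)
    · simp
      field_simp
      ring
    · simp [hchar]
    · simp [← two_smul k t, mul_smul, smul_comm b (2 : k) t]
  have h4 : cTilde (W := W) (2 : k) ∘ₗ cTilde (2 : k)⁻¹ = LinearMap.id := by
    refine LinearMap.ext ?_
    rintro ⟨a, b, w⟩
    simp [cTilde_apply, hchar]
  have h5 := congrArg LinearMap.det h4
  rw [LinearMap.det_comp, LinearMap.det_id] at h5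
  have h6 := congrArg LinearMap.det h3
  rw [LinearMap.det_comp, LinearMap.det_comp, ← h2, mul_left_comm, h5, mul_one] at h6
  have h7 : LinearMap.det (hMap BW t LinearMap.id) ≠ 0 := left_ne_zero_of_mul_eq_one h1
  exact (mul_left_cancel₀ h7 (by rw [← h6, mul_one])).symm

theorem det_hMap [FiniteDimensional k W] (hchar : (2 : k) ≠ 0) (BW : LinearMap.BilinForm k W)
    (hsymm : ∀ x y, BW x y = BW y x) (t : W) (R : W →ₗ[k] W) :
    LinearMap.det (hMap BW t R) = LinearMap.det R := by
  have h := hMap_comp hchar BW hsymm t 0 LinearMap.id R (fun _ _ => rfl)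
  have h0 : hMap BW 0 R = LinearMap.prodMap LinearMap.id (LinearMap.prodMap LinearMap.id R) := by
    refine LinearMap.ext ?_
    rintro ⟨a, b, w⟩
    simp [hMap_apply]
  have h2 := congrArg LinearMap.det h
  rw [LinearMap.det_comp, det_hMap_id hchar BW hsymm, h0, LinearMap.det_prodMap,
    LinearMap.det_prodMap] at h2
  simpa using h2.symm

/-- `(t,R) ↦ h(t,R)` is a group isomorphism from the Poincaré group `P_W = W ⋊ SO(W)`
(with multiplication `(t,R)(t',R') = (t + Rt', RR')`) onto the stabilizer `H_p` of the
null vector `p` in `SO(V)`, where `V = kp ⊕ kq ⊕ W`: it lands in `H_p`, is a homomorphism,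
is injective, and is surjective onto `H_p`. -/
theorem stmt_9 {k W : Type*} [Field k] [AddCommGroup W] [Module k W]
    [FiniteDimensional k W] (hchar : (2 : k) ≠ 0)
    (BW : LinearMap.BilinForm k W)
    (hsymm : ∀ x y, BW x y = BW y x)
    (hnd : ∀ x, (∀ y, BW x y = 0) → x = 0) :
    -- the map lands in the stabilizer `H_p` of `p` in `SO(V)`
    (∀ (t : W) (R : W →ₗ[k] W), IsSO BW R →
      IsSO (Bext BW) (hMap BW t R) ∧ hMap BW t R pVec = pVec) ∧
    -- group homomorphism: `h(t,R) ∘ h(t',R') = h(t + Rt', RR')`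
    (∀ (t t' : W) (R R' : W →ₗ[k] W), IsSO BW R → IsSO BW R' →
      (hMap BW t R) ∘ₗ (hMap BW t' R') = hMap BW (t + R t') (R ∘ₗ R')) ∧
    -- injectivity
    (∀ (t t' : W) (R R' : W →ₗ[k] W), hMap BW t R = hMap BW t' R' → t = t' ∧ R = R') ∧
    -- surjectivity onto the stabilizer of `p` in `SO(V)`
    (∀ g : (k × k × W) →ₗ[k] (k × k × W), IsSO (Bext BW) g → g pVec = pVec →
      ∃ (t : W) (R : W →ₗ[k] W), IsSO BW R ∧ g = hMap BW t R) := by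
  refine ⟨?_, ?_, ?_, ?_⟩
  · rintro t R ⟨_, hR, hd⟩
    have hd' := (det_hMap hchar BW hsymm t R).trans hd
    refine ⟨⟨bij_of_det _ hd', ?_, hd'⟩, ?_⟩
    · rintro ⟨a, b, w⟩ ⟨a', b', w'⟩
      simp [hMap_apply, Bext_apply, hR, hsymm (R w) t]
      field_simp
      ring
    · simp [pVec, hMap_apply]
  · rintro t t' R R' ⟨_, hR, _⟩ _
    exact hMap_comp hchar BW hsymm t t' R R' hR
  · intro t t' R R' h
    constructor
    · have := LinearMap.congr_fun h (0, 1, 0)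
      simp [hMap_apply] at this
      exact this.2
    · refine LinearMap.ext fun w => ?_
      have := LinearMap.congr_fun h (0, 0, w)
      simp [hMap_apply] at this
      exact this.2
  · rintro g ⟨_, hg, hd⟩ hp
    let R : W →ₗ[k] W := LinearMap.snd k k W ∘ₗ LinearMap.snd k k (k × W) ∘ₗ g ∘ₗ
      LinearMap.inr k k (k × W) ∘ₗ LinearMap.inr k k W
    have hRw : ∀ w, R w = (g (0, 0, w)).2.2 := fun w => rfl
    obtain ⟨t, ht⟩ : ∃ t, t = (g (0, 1, 0)).2.2 := ⟨_, rfl⟩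
    have hq1 : (g (0, 1, 0)).2.1 = 1 := by
      have := hg pVec (0, 1, 0)
      rw [hp] at this
      simpa [Bext_apply, pVec] using this
    have hw1 : ∀ w, (g (0, 0, w)).2.1 = 0 := by
      intro w
      have := hg pVec (0, 0, w)
      rw [hp] at this
      simpa [Bext_apply, pVec] using this
    have hq0 : (g (0, 1, 0)).1 = - (BW t t / 2) := by
      have := hg (0, 1, 0) (0, 1, 0)
      simp only [Bext_apply, hq1, ← ht] at this
      simp at this
      field_simp
      linear_combination this
    have hw0 : ∀ w, (g (0, 0, w)).1 = - BW t (R w) := by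
      intro w
      have := hg (0, 1, 0) (0, 0, w)
      simp only [Bext_apply, hq1, ← ht, hw1, ← hRw] at this
      simp at this
      linear_combination this
    have hgh : g = hMap BW t R := by
      refine LinearMap.ext ?_
      rintro ⟨a, b, w⟩
      have e : ((a, b, w) : k × k × W) = a • pVec + b • (0, 1, 0) + (0, 0, w) := by
        simp [pVec]
      have eq : g (0, 1, 0) = (- (BW t t / 2), 1, t) := Prod.ext hq0 (Prod.ext hq1 ht.symm)
      have ew : g (0, 0, w) = (- BW t (R w), 0, R w) := Prod.ext (hw0 w) (Prod.ext (hw1 w) rfl)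
      rw [hMap_apply, e, map_add, map_add, map_smul, map_smul, hp, eq, ew]
      simp [pVec]
      ring
    have hdR : LinearMap.det R = 1 := by
      rw [← det_hMap hchar BW hsymm t R, ← hgh, hd]
    refine ⟨t, R, ⟨bij_of_det _ hdR, ?_, hdR⟩, hgh⟩
    intro x y
    have := hg (0, 0, x) (0, 0, y)
    simp only [Bext_apply, hw1, ← hRw] at this
    simpa using this

end ConformalModel
end

section
/- Let k be a field of characteristic ≠ 2, (W, B_W) a finite-dimensional vector space over k with a nondegenerate symmetric bilinear form, and let V = kp ⊕ kq ⊕ W carry the symmetric bilinear form B extending B_W with B(p,p) = B(q,q) = 0, B(p,q) = 1, and p, q orthogonal to W. Then for all t, t' ∈ W and R, R' ∈ SO(W): (i) h(t,R) preserves B and has determinant 1, i.e. h(t,R) ∈ SO(V); (ii) h(t,R) p = p; (iii) h(t,R) ∘ h(t',R') = h(t + Rt', RR'). -/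
namespace ConformalModel

variable {k W : Type*} [Field k] [AddCommGroup W] [Module k W]

theorem hMap_comp_aux {k W : Type*} [Field k] [AddCommGroup W] [Module k W]
    (hchar : (2 : k) ≠ 0) (BW : LinearMap.BilinForm k W)
    (hsymm : ∀ x y, BW x y = BW y x) (t t' : W) (R R' : W →ₗ[k] W)
    (hR : ∀ x y, BW (R x) (R y) = BW x y) :
    (hMap BW t R) ∘ₗ (hMap BW t' R') = hMap BW (t + R t') (R ∘ₗ R') := by
  refine LinearMap.ext fun x => ?_
  obtain ⟨a, b, w⟩ := x
  refine Prod.ext ?_ (Prod.ext ?_ ?_)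
  · simp [hMap, hR, hsymm (R t') t]
    field_simp
    ring
  · simp [hMap]
  · simp [hMap, add_assoc]

theorem hMap_zero_id_aux {k W : Type*} [Field k] [AddCommGroup W] [Module k W]
    (BW : LinearMap.BilinForm k W) : hMap BW 0 LinearMap.id = LinearMap.id := by
  refine LinearMap.ext fun x => ?_
  simp [hMap]

theorem hMap_det_id_aux {k W : Type*} [Field k] [AddCommGroup W] [Module k W]
    (hchar : (2 : k) ≠ 0) (BW : LinearMap.BilinForm k W)
    (hsymm : ∀ x y, BW x y = BW y x) (t : W) :
    LinearMap.det (hMap BW t LinearMap.id) = 1 := by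
  set s : W := (2 : k)⁻¹ • t with hs
  have hss : s + s = t := by
    rw [hs, ← add_smul, ← two_mul, mul_inv_cancel₀ hchar, one_smul]
  have h1 : (hMap BW s LinearMap.id) ∘ₗ (hMap BW s LinearMap.id) = hMap BW t LinearMap.id := by
    rw [hMap_comp_aux hchar BW hsymm s s _ _ (fun _ _ => rfl)]
    simp [hss]
  have h2 : (hMap BW s LinearMap.id) ∘ₗ (hMap BW (-s) LinearMap.id) = LinearMap.id := by
    rw [hMap_comp_aux hchar BW hsymm s (-s) _ _ (fun _ _ => rfl)]
    simp [hMap_zero_id_aux]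
  have hD : (cTilde (-1 : k) : (k × k × W) →ₗ[k] _) ∘ₗ cTilde (-1 : k) = LinearMap.id := by
    refine LinearMap.ext fun x => ?_
    simp [cTilde, inv_neg]
  have h3 : cTilde (-1 : k) ∘ₗ (hMap BW s LinearMap.id) ∘ₗ cTilde (-1 : k)
      = hMap BW (-s) LinearMap.id := by
    refine LinearMap.ext fun x => ?_
    obtain ⟨a, b, w⟩ := x
    refine Prod.ext ?_ (Prod.ext ?_ ?_)
    · simp [hMap, cTilde, inv_neg]
      ring
    · simp [hMap, cTilde, inv_neg]
    · simp [hMap, cTilde, inv_neg]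
  have d2 := congrArg LinearMap.det h2
  have d3 := congrArg LinearMap.det h3
  have dD := congrArg LinearMap.det hD
  rw [← h1]
  simp only [LinearMap.det_comp, LinearMap.det_id] at *
  rw [← d3] at d2
  linear_combination d2 - LinearMap.det (hMap BW s LinearMap.id) ^ 2 * dD

theorem hMap_det_aux {k W : Type*} [Field k] [AddCommGroup W] [Module k W]
    [FiniteDimensional k W] (hchar : (2 : k) ≠ 0) (BW : LinearMap.BilinForm k W)
    (hsymm : ∀ x y, BW x y = BW y x) (t : W) (R : W →ₗ[k] W) :
    LinearMap.det (hMap BW t R) = LinearMap.det R := by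
  have h : hMap BW t R = (hMap BW t LinearMap.id) ∘ₗ
      ((LinearMap.id : k →ₗ[k] k).prodMap ((LinearMap.id : k →ₗ[k] k).prodMap R)) := by
    refine LinearMap.ext fun x => ?_
    simp [hMap]
  rw [h, LinearMap.det_comp, hMap_det_id_aux hchar BW hsymm, LinearMap.det_prodMap,
    LinearMap.det_prodMap]
  simp

/-- For all `t, t' ∈ W` and `R, R' ∈ SO(W)`: (i) `h(t,R) ∈ SO(V)` where `V = kp ⊕ kq ⊕ W`;
(ii) `h(t,R) p = p`; (iii) `h(t,R) ∘ h(t',R') = h(t + Rt', RR')`. -/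
theorem stmt_10 {k W : Type*} [Field k] [AddCommGroup W] [Module k W]
    [FiniteDimensional k W] (hchar : (2 : k) ≠ 0)
    (BW : LinearMap.BilinForm k W)
    (hsymm : ∀ x y, BW x y = BW y x)
    (hnd : ∀ x, (∀ y, BW x y = 0) → x = 0) :
    ∀ (t t' : W) (R R' : W →ₗ[k] W), IsSO BW R → IsSO BW R' →
      IsSO (Bext BW) (hMap BW t R) ∧
      hMap BW t R pVec = pVec ∧
      (hMap BW t R) ∘ₗ (hMap BW t' R') = hMap BW (t + R t') (R ∘ₗ R') := by
  intro t t' R R' hR hR'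
  have hdet : LinearMap.det (hMap BW t R) = 1 := by
    rw [hMap_det_aux hchar BW hsymm, hR.2.2]
  refine ⟨⟨?_, ?_, hdet⟩, ?_, hMap_comp_aux hchar BW hsymm t t' R R' hR.2.1⟩
  · have hu : IsUnit (hMap BW t R) := by
      rw [LinearMap.isUnit_iff_isUnit_det, hdet]
      exact isUnit_one
    exact (Module.End.isUnit_iff _).1 hu
  · rintro ⟨a, b, w⟩ ⟨a', b', w'⟩
    simp [Bext, hMap, hR.2.1, hsymm (R w) t]
    field_simp
    ring
  · simp [hMap, pVec]

end ConformalModel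
end

section
/- Let k be a field of characteristic ≠ 2, (W, B_W) a finite-dimensional vector space over k with a nondegenerate symmetric bilinear form, and let V = kp ⊕ kq ⊕ W carry the symmetric bilinear form B extending B_W with B(p,p) = B(q,q) = 0, B(p,q) = 1, and p, q orthogonal to W. For c ∈ k^× let c̃ be the linear map of V with c̃ p = c p, c̃ q = c⁻¹ q, and c̃ w = w for w ∈ W. Then: (i) an element g ∈ SO(V) satisfies g(k p) = k p if and only if g = c̃ ∘ h(t,R) for (necessarily unique) c ∈ k^×, t ∈ W, R ∈ SO(W); (ii) the multiplication law is (c̃ ∘ h(t,R)) ∘ (c̃' ∘ h(t',R')) = (cc')~ ∘ h(c'⁻¹ t + R t', RR'). Consequently the stabilizer of the line kp in SO(V) is isomorphic as a group to W ⋊ (SO(W) × k^×). -/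
namespace ConformalModel

variable {k W : Type*} [Field k] [AddCommGroup W] [Module k W]

theorem aux_mul (hchar : (2 : k) ≠ 0) (BW : LinearMap.BilinForm k W)
    (hsymm : ∀ x y, BW x y = BW y x)
    (c c' : k) (t t' : W) (R R' : W →ₗ[k] W) (hc' : c' ≠ 0)
    (hR : ∀ x y, BW (R x) (R y) = BW x y) :
    (cTilde c ∘ₗ hMap BW t R) ∘ₗ (cTilde c' ∘ₗ hMap BW t' R') =
        cTilde (c * c') ∘ₗ hMap BW (c'⁻¹ • t + R t') (R ∘ₗ R') := by
  apply LinearMap.ext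
  rintro ⟨a, b, w⟩
  refine Prod.ext ?_ (Prod.ext ?_ ?_)
  · simp only [LinearMap.comp_apply, cTilde, hMap, LinearMap.coe_mk, AddHom.coe_mk, map_add,
      map_smul, LinearMap.add_apply, LinearMap.smul_apply, smul_eq_mul, hR, hsymm (R t') t]
    field_simp
    ring
  · simp [cTilde, hMap]
    ring
  · simp [cTilde, hMap, smul_smul]
    rw [mul_comm, add_assoc]

theorem cTilde_one : (cTilde 1 : (k × k × W) →ₗ[k] (k × k × W)) = LinearMap.id := by
  apply LinearMap.ext
  rintro ⟨a, b, w⟩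
  simp [cTilde]

theorem hMap_zero (BW : LinearMap.BilinForm k W) (R : W →ₗ[k] W) :
    hMap BW 0 R = LinearMap.prodMap LinearMap.id (LinearMap.prodMap LinearMap.id R) := by
  apply LinearMap.ext
  rintro ⟨a, b, w⟩
  simp [hMap]

theorem det_cTilde [FiniteDimensional k W] (c : k) (hc : c ≠ 0) :
    LinearMap.det (cTilde c : (k × k × W) →ₗ[k] (k × k × W)) = 1 := by
  have : (cTilde c : (k × k × W) →ₗ[k] (k × k × W)) =
      LinearMap.prodMap (c • LinearMap.id) (LinearMap.prodMap (c⁻¹ • LinearMap.id) LinearMap.id) := by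
    apply LinearMap.ext
    rintro ⟨a, b, w⟩
    simp [cTilde]
  rw [this, LinearMap.det_prodMap, LinearMap.det_prodMap]
  simp [hc]

theorem det_main [FiniteDimensional k W] (hchar : (2 : k) ≠ 0) (BW : LinearMap.BilinForm k W)
    (hsymm : ∀ x y, BW x y = BW y x) (c : k) (hc : c ≠ 0) (t : W) (R : W →ₗ[k] W) :
    LinearMap.det (cTilde c ∘ₗ hMap BW t R) = LinearMap.det R := by
  have h : hMap BW t R = hMap BW t LinearMap.id ∘ₗ hMap BW 0 R := by
    apply LinearMap.ext
    rintro ⟨a, b, w⟩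
    simp [hMap]
  rw [h, LinearMap.det_comp, LinearMap.det_comp, det_cTilde c hc, det_hMap_id hchar BW hsymm,
    hMap_zero, LinearMap.det_prodMap, LinearMap.det_prodMap]
  simp

/-- Description of the stabilizer of the line `kp` in `SO(V)`, `V = kp ⊕ kq ⊕ W`:
(i) `g ∈ SO(V)` stabilizes the line `kp` iff `g = c̃ ∘ h(t,R)` for some `c ∈ k^×`, `t ∈ W`,
`R ∈ SO(W)`, and such `(c,t,R)` is unique; (ii) the multiplication law is
`(c̃ ∘ h(t,R)) ∘ (c̃' ∘ h(t',R')) = (cc')~ ∘ h(c'⁻¹t + Rt', RR')`, so the stabilizer of the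
line `kp` is isomorphic to `W ⋊ (SO(W) × k^×)`. -/
theorem stmt_14 {k W : Type*} [Field k] [AddCommGroup W] [Module k W]
    [FiniteDimensional k W] (hchar : (2 : k) ≠ 0)
    (BW : LinearMap.BilinForm k W)
    (hsymm : ∀ x y, BW x y = BW y x)
    (hnd : ∀ x, (∀ y, BW x y = 0) → x = 0) :
    -- (i) existence: the elements of `SO(V)` stabilizing the line `kp` are exactly
    -- the products `c̃ ∘ h(t,R)`
    (∀ g : (k × k × W) →ₗ[k] (k × k × W), IsSO (Bext BW) g →
      (g pVec ∈ Submodule.span k {(pVec : k × k × W)} ↔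
        ∃ (c : k) (t : W) (R : W →ₗ[k] W), c ≠ 0 ∧ IsSO BW R ∧
          g = cTilde c ∘ₗ hMap BW t R)) ∧
    -- (i) uniqueness of `(c,t,R)`
    (∀ (c c' : k) (t t' : W) (R R' : W →ₗ[k] W), c ≠ 0 → c' ≠ 0 →
      cTilde c ∘ₗ hMap BW t R = cTilde c' ∘ₗ hMap BW t' R' →
      c = c' ∧ t = t' ∧ R = R') ∧
    -- (ii) the multiplication law
    (∀ (c c' : k) (t t' : W) (R R' : W →ₗ[k] W), c ≠ 0 → c' ≠ 0 →
      IsSO BW R → IsSO BW R' →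
      (cTilde c ∘ₗ hMap BW t R) ∘ₗ (cTilde c' ∘ₗ hMap BW t' R') =
        cTilde (c * c') ∘ₗ hMap BW (c'⁻¹ • t + R t') (R ∘ₗ R')) := by
  refine ⟨?_, ?_, ?_⟩
  · intro g hg
    constructor
    · intro hp
      obtain ⟨hbij, hB, hdet⟩ := hg
      obtain ⟨c, hc⟩ := Submodule.mem_span_singleton.1 hp
      have hc0 : c ≠ 0 := by
        rintro rfl
        rw [zero_smul] at hc
        have h1 : (pVec : k × k × W) = 0 := hbij.1 (by rw [← hc, map_zero])
        exact one_ne_zero (congrArg Prod.fst h1)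
      have hgp : g (1, 0, 0) = (c, 0, 0) := by
        change g pVec = _
        rw [← hc]
        simp [pVec]
      let R : W →ₗ[k] W := LinearMap.snd k k W ∘ₗ LinearMap.snd k k (k × W) ∘ₗ g ∘ₗ
        LinearMap.inr k k (k × W) ∘ₗ LinearMap.inr k k W
      have hRw : ∀ w, R w = (g (0, 0, w)).2.2 := fun w => rfl
      have hBe : ∀ x y : k × k × W, Bext BW x y = x.1 * y.2.1 + x.2.1 * y.1 + BW x.2.2 y.2.2 :=
        fun x y => rfl
      have hw2 : ∀ w, (g (0, 0, w)).2.1 = 0 := by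
        intro w
        have := hB (1, 0, 0) (0, 0, w)
        rw [hgp] at this
        simpa [hBe, hc0] using this
      have hq2 : (g (0, 1, 0)).2.1 = c⁻¹ := by
        have := hB (1, 0, 0) (0, 1, 0)
        rw [hgp] at this
        simp [hBe] at this
        exact eq_inv_of_mul_eq_one_right this
      have hq1 : (g (0, 1, 0)).1 = c * (-(BW (g (0, 1, 0)).2.2 (g (0, 1, 0)).2.2 / 2)) := by
        have := hB (0, 1, 0) (0, 1, 0)
        simp only [hBe, hq2] at this
        simp at this
        field_simp at this ⊢
        linear_combination this
      have hw1 : ∀ w, (g (0, 0, w)).1 = c * (-(BW (g (0, 1, 0)).2.2 (R w))) := by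
        intro w
        have := hB (0, 1, 0) (0, 0, w)
        simp only [hBe, hq2, hw2, ← hRw] at this
        simp at this
        field_simp at this ⊢
        linear_combination this
      have hRB : ∀ x y, BW (R x) (R y) = BW x y := by
        intro x y
        have := hB (0, 0, x) (0, 0, y)
        simpa [hBe, hw2, ← hRw] using this
      have hinj : Function.Injective R := by
        rw [injective_iff_map_eq_zero]
        intro x hx
        apply hnd
        intro y
        rw [← hRB, hx]
        simp
      have hgeq : g = cTilde c ∘ₗ hMap BW (g (0, 1, 0)).2.2 R := by
        apply LinearMap.ext
        rintro ⟨a, b, w⟩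
        have e : ((a, b, w) : k × k × W) = a • (1, 0, 0) + b • (0, 1, 0) + (0, 0, w) := by simp
        have e2 : g (a, b, w) = a • (c, 0, 0) + b • g (0, 1, 0) + g (0, 0, w) := by
          rw [e, map_add, map_add, map_smul, map_smul, hgp]
        rw [e2]
        refine Prod.ext ?_ (Prod.ext ?_ ?_)
        · simp [cTilde, hMap, hw1, hq1]
          ring
        · simp [cTilde, hMap, hw2, hq2]
          ring
        · simp [cTilde, hMap, hRw]
      refine ⟨c, (g (0, 1, 0)).2.2, R, hc0,
        ⟨⟨hinj, LinearMap.injective_iff_surjective.1 hinj⟩, hRB, ?_⟩, hgeq⟩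
      rw [← det_main hchar BW hsymm c hc0 (g (0, 1, 0)).2.2 R, ← hgeq, hdet]
    · rintro ⟨c, t, R, hc, hR, rfl⟩
      refine Submodule.mem_span_singleton.2 ⟨c, ?_⟩
      simp [pVec, cTilde, hMap]
  · intro c c' t t' R R' hc hc' h
    have h1 := LinearMap.congr_fun h (1, 0, 0)
    have h2 := LinearMap.congr_fun h (0, 1, 0)
    have h3 := fun w => LinearMap.congr_fun h (0, 0, w)
    simp [cTilde, hMap] at h1 h2 h3
    exact ⟨h1, h2.2.2, LinearMap.ext fun w => (h3 w).2⟩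
  · intro c c' t t' R R' hc hc' hR hR'
    exact aux_mul hchar BW hsymm c c' t t' R R' hc' hR.2.1

end ConformalModel
end

section
/- Let k be a field of characteristic ≠ 2 and (V, B) a finite-dimensional vector space over k with a nondegenerate symmetric bilinear form B, and let p ∈ V be a nonzero vector with B(p,p) = 0. Let A_p = {a ∈ V : a ≠ 0, B(a,a) = 0, B(p,a) ≠ 0}. If g ∈ SO(V) satisfies g(A_p) = A_p, then g stabilizes the line kp, i.e. g p ∈ kp. Thus the stabilizer of the line kp is the largest subgroup of SO(V) leaving A_p invariant. -/
/-- Let `p` be a null vector of a nondegenerate symmetric bilinear form `B` (char ≠ 2) and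
`A_p = {a : a ≠ 0, B(a,a) = 0, B(p,a) ≠ 0}`. An element `g ∈ SO(V)` satisfies
`g(A_p) = A_p` if and only if `g` stabilizes the line `kp`, i.e. `g p ∈ kp`; thus the
stabilizer of the line `kp` is the largest subgroup of `SO(V)` leaving `A_p` invariant. -/
theorem stmt_15 {k V : Type*} [Field k] [AddCommGroup V] [Module k V]
    [FiniteDimensional k V] (hchar : (2 : k) ≠ 0)
    (B : LinearMap.BilinForm k V)
    (hsymm : ∀ x y, B x y = B y x)
    (hnd : ∀ x, (∀ y, B x y = 0) → x = 0)
    (p : V) (hp : p ≠ 0) (hpnull : B p p = 0)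
    (g : V ≃ₗ[k] V) (hg : ∀ x y, B (g x) (g y) = B x y)
    (hgdet : LinearMap.det g.toLinearMap = 1) :
    (⇑g '' {a : V | a ≠ 0 ∧ B a a = 0 ∧ B p a ≠ 0} =
        {a : V | a ≠ 0 ∧ B a a = 0 ∧ B p a ≠ 0}) ↔
      g p ∈ Submodule.span k {p} := by
  constructor
  · intro h
    have key : ∀ b : V, B b b = 0 → (B p b ≠ 0 ↔ B p (g b) ≠ 0) := by
      intro b hb
      by_cases hb0 : b = 0
      · simp [hb0]
      have hgb0 : g b ≠ 0 := by simpa using hb0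
      constructor
      · intro h1
        have h2 : g b ∈ {a : V | a ≠ 0 ∧ B a a = 0 ∧ B p a ≠ 0} := by
          rw [← h]
          exact ⟨b, ⟨hb0, hb, h1⟩, rfl⟩
        exact h2.2.2
      · intro h1
        have h2 : g b ∈ {a : V | a ≠ 0 ∧ B a a = 0 ∧ B p a ≠ 0} :=
          ⟨hgb0, by rw [hg, hb], h1⟩
        rw [← h] at h2
        obtain ⟨c, hc, hcb⟩ := h2
        rw [g.injective hcb] at hc
        exact hc.2.2
    have key2 : ∀ a : V, B a a = 0 → B (g p) a = 0 → B p a = 0 := by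
      intro a ha hq
      have h1 := key (g.symm a) (by rw [← hg]; simpa using ha)
      rw [← hg, LinearEquiv.apply_symm_apply] at h1
      by_contra h2
      exact h1.2 h2 hq
    have hqp : B (g p) p = 0 := by
      by_contra h2
      have h1 := key (g.symm p) (by rw [← hg]; simpa using hpnull)
      rw [← hg, LinearEquiv.apply_symm_apply] at h1
      exact h1.1 h2 hpnull
    have key3 : ∀ r : V, B (g p) r = 0 → B p r = 0 := by
      intro r hr
      by_contra h2
      have h3 := key2 (r + (-(B r r) / (2 * B p r)) • p)
        (by
          simp only [map_add, map_smul, LinearMap.add_apply, LinearMap.smul_apply, smul_eq_mul,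
            hpnull, hsymm r p]
          field_simp
          ring)
        (by simp [hr, hqp])
      simp [hpnull] at h3
      exact h2 h3
    have hq0 : g p ≠ 0 := by simpa using hp
    obtain ⟨s, hs⟩ : ∃ s, B (g p) s ≠ 0 := by
      by_contra! h2
      exact hq0 (hnd _ h2)
    have hpc : p - (B p s / B (g p) s) • g p = 0 := by
      apply hnd
      intro y
      have h4 := key3 (y - (B (g p) y / B (g p) s) • s)
        (by simp only [map_sub, map_smul, smul_eq_mul]; field_simp; ring)
      simp only [map_sub, map_smul, smul_eq_mul, LinearMap.sub_apply, LinearMap.smul_apply] at h4 ⊢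
      rw [← h4]
      ring
    have hc : B p s / B (g p) s ≠ 0 := by
      intro h0
      rw [h0] at hpc
      simp at hpc
      exact hp hpc
    rw [Submodule.mem_span_singleton]
    refine ⟨(B p s / B (g p) s)⁻¹, ?_⟩
    rw [inv_smul_eq_iff₀ hc]
    exact sub_eq_zero.1 hpc
  · intro h
    obtain ⟨c, hc⟩ := Submodule.mem_span_singleton.1 h
    have hq0 : g p ≠ 0 := by simpa using hp
    have hc0 : c ≠ 0 := by
      rintro rfl
      exact hq0 (by rw [← hc, zero_smul])
    have e : ∀ a, B p a = c * B p (g a) := by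
      intro a
      rw [← hg p a, ← hc]
      simp
    ext a
    constructor
    · rintro ⟨b, ⟨h1, h2, h3⟩, rfl⟩
      refine ⟨by simpa using h1, by rw [hg, h2], ?_⟩
      intro h4
      exact h3 (by rw [e, h4, mul_zero])
    · rintro ⟨h1, h2, h3⟩
      refine ⟨g.symm a, ⟨by simpa using h1, by rw [← hg]; simpa using h2, ?_⟩, by simp⟩
      rw [e, LinearEquiv.apply_symm_apply]
      exact mul_ne_zero hc0 h3
end

section
/- Let L and C be groups and let M be an abelian group equipped with an action of the direct product L × C by automorphisms. Suppose that (i) every 1-cocycle of L with coefficients in M (for the restricted action) is a coboundary, and (ii) the only element of M fixed by every element of L is 0. Then every 1-cocycle of L × C with coefficients in M is a coboundary; i.e. H¹(L × C, M) = 0. -/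
/-- If every 1-cocycle of `L` with coefficients in `M` (for the action restricted from
`L × C`) is a coboundary, and `0` is the only element of `M` fixed by every element of `L`,
then every 1-cocycle of `L × C` with coefficients in `M` is a coboundary, i.e.
`H¹(L × C, M) = 0`. -/
theorem stmt_17 {L C M : Type*} [Group L] [Group C] [AddCommGroup M]
    [DistribMulAction (L × C) M]
    (h1 : ∀ F : L → M,
      (∀ g g' : L, F (g * g') = F g + ((g, (1 : C)) : L × C) • F g') →
      ∃ lam : M, ∀ g : L, F g = ((g, (1 : C)) : L × C) • lam - lam)
    (h2 : ∀ m : M, (∀ g : L, ((g, (1 : C)) : L × C) • m = m) → m = 0) :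
    ∀ F : L × C → M, (∀ x y : L × C, F (x * y) = F x + x • F y) →
      ∃ lam : M, ∀ x : L × C, F x = x • lam - lam := by
  intro F hF
  obtain ⟨lam, hl⟩ := h1 (fun g => F (g, 1)) (fun g g' => by
    have := hF (g, 1) (g', 1)
    simpa using this)
  have hl' : ∀ g : L, F (g, 1) = ((g, (1 : C)) : L × C) • lam - lam := hl
  have hC : ∀ c : C, F (1, c) = ((1, c) : L × C) • lam - lam := by
    intro c
    rw [← sub_eq_zero]
    apply h2
    intro g
    have e1 := hF (g, 1) (1, c)
    have e2 := hF (1, c) (g, 1)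
    have e3 : ((1, c) : L × C) * (g, 1) = (g, 1) * (1, c) := by simp
    have e4 : ((1, c) : L × C) • ((g, 1) : L × C) • lam
        = ((g, 1) : L × C) • ((1, c) : L × C) • lam := by
      rw [smul_smul, smul_smul, e3]
    rw [e3, e1, hl', smul_sub, e4] at e2
    have e5 : ((g, 1) : L × C) • F (1, c) = F (1, c)
        + (((g, 1) : L × C) • ((1, c) : L × C) • lam - ((1, c) : L × C) • lam)
        - (((g, 1) : L × C) • lam - lam) := by
      rw [← e2]; abel
    rw [smul_sub, smul_sub, e5]
    abel
  refine ⟨lam, ?_⟩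
  rintro ⟨g, c⟩
  have e : ((g, c) : L × C) = (g, 1) * (1, c) := by simp
  rw [e, hF, hl', hC, smul_sub, mul_smul]
  abel
end

section
/- Let p be a prime, n ≥ 3, and let B be a nondegenerate symmetric bilinear form on V = ℚ_p^n with quadratic form Q(x) = B(x,x). Let x ∈ V with Q(x) = a ≠ 0. Then the orbit of x under the group SO(V) × ℚ_p^× acting by (g,c)·v = c·(g v) equals {y ∈ V : Q(y) ∈ a·(ℚ_p^×)²} and is an open subset of V. -/
open Filter Topology in
theorem aux_open (p : ℕ) [Fact p.Prime] (a : ℚ_[p]) (ha : a ≠ 0) :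
    IsOpen {t : ℚ_[p] | ∃ c : ℚ_[p], c ≠ 0 ∧ t = a * c ^ 2} := by
  rw [isOpen_iff_mem_nhds]
  rintro t ⟨c, hc, rfl⟩
  have h : HasStrictDerivAt (fun c : ℚ_[p] => a * c ^ 2) (a * (2 * c)) c := by
    simpa using (hasStrictDerivAt_pow 2 c).const_mul a
  have h2 : a * (2 * c) ≠ 0 := mul_ne_zero ha (mul_ne_zero two_ne_zero hc)
  have h3 := h.map_nhds_eq h2
  rw [← h3, mem_map]
  filter_upwards [isOpen_ne.mem_nhds hc] with d hd
  exact ⟨d, hd, rfl⟩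

theorem aux_refl {K V : Type*} [Field K] [AddCommGroup V] [Module K V] [FiniteDimensional K V]
    (B : LinearMap.BilinForm K V) (hsymm : ∀ x y, B x y = B y x) (v : V) (hv : B v v ≠ 0) :
    ∃ g : V ≃ₗ[K] V, (∀ u w, B (g u) (g w) = B u w) ∧ LinearMap.det g.toLinearMap = -1 ∧
      ∀ u, g u = u - (2 * B v u / B v v) • v := by
  have h2 : ((2 / B v v) • B v) v = 2 := by
    simp [div_mul_cancel₀ _ hv]
  have key : ∀ u, Module.reflection h2 u = u - (2 * B v u / B v v) • v := by
    intro u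
    rw [Module.reflection_apply]
    simp [div_mul_eq_mul_div]
  refine ⟨Module.reflection h2, ?_, ?_, key⟩
  · intro u w
    rw [key, key]
    simp only [map_sub, map_smul, LinearMap.sub_apply, LinearMap.smul_apply, smul_eq_mul,
      hsymm u v]
    field_simp
    ring
  · have : (Module.reflection h2).toLinearMap
        = LinearMap.transvection (-((2 / B v v) • B v)) v := by
      ext u
      simp [Module.reflection_apply, LinearMap.transvection.apply, sub_eq_add_neg]
    rw [this, LinearMap.transvection.det, LinearMap.neg_apply, h2]
    norm_num

theorem aux_perp {K V : Type*} [Field K] [CharZero K] [AddCommGroup V] [Module K V]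
    [FiniteDimensional K V] (hd : 1 < Module.finrank K V)
    (B : LinearMap.BilinForm K V) (hsymm : ∀ x y, B x y = B y x)
    (hnd : ∀ x, (∀ y, B x y = 0) → x = 0) (x : V) (hx : B x x ≠ 0) :
    ∃ w, B x w = 0 ∧ B w w ≠ 0 := by
  by_contra! H
  have hk : LinearMap.ker (B x) ≠ ⊥ :=
    LinearMap.ker_ne_bot_of_finrank_lt (by rwa [Module.finrank_self])
  obtain ⟨z, hz, hz0⟩ := Submodule.exists_mem_ne_zero_of_ne_bot hk
  rw [LinearMap.mem_ker] at hz
  refine hz0 (hnd z fun y => ?_)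
  have h1 : B x (y - (B x y / B x x) • x) = 0 := by
    simp [div_mul_cancel₀ _ hx]
  set y' := y - (B x y / B x x) • x with hy'
  have h2 := H (z + y') (by rw [map_add, hz, h1, add_zero])
  have h3 : B z y' = B z y := by simp [hy', hsymm z x, hz]
  simp only [map_add, LinearMap.add_apply, H z hz, H y' h1, hsymm y' z, h3] at h2
  have : 2 * B z y = 0 := by linear_combination h2
  simpa using this

theorem aux_trans {K V : Type*} [Field K] [CharZero K] [AddCommGroup V] [Module K V]
    [FiniteDimensional K V] (hd : 1 < Module.finrank K V)
    (B : LinearMap.BilinForm K V) (hsymm : ∀ x y, B x y = B y x)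
    (hnd : ∀ x, (∀ y, B x y = 0) → x = 0) (x y : V) (hx : B x x ≠ 0) (hxy : B y y = B x x) :
    ∃ g : V ≃ₗ[K] V, (∀ u w, B (g u) (g w) = B u w) ∧ LinearMap.det g.toLinearMap = 1 ∧
      g x = y := by
  have comp : ∀ g h : V ≃ₗ[K] V, LinearMap.det g.toLinearMap = -1 →
      LinearMap.det h.toLinearMap = -1 → LinearMap.det (g.trans h).toLinearMap = 1 := by
    intro g h hg hh
    rw [LinearEquiv.coe_trans, LinearMap.det_comp, hg, hh]
    norm_num
  by_cases h : B (x - y) (x - y) = 0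
  · have h' : B (x + y) (x + y) ≠ 0 := by
      intro h'
      simp only [map_add, map_sub, LinearMap.add_apply, LinearMap.sub_apply] at h h'
      have : 4 * B x x = 0 := by linear_combination h + h' - 2 * hxy
      simp [hx] at this
    obtain ⟨g, hg, hgd, hga⟩ := aux_refl B hsymm _ h'
    obtain ⟨k, hk, hkd, hka⟩ := aux_refl B hsymm y (hxy ▸ hx)
    refine ⟨g.trans k, fun u w => by simp [hk, hg], comp _ _ hgd hkd, ?_⟩
    have e : 2 * B (x + y) x / B (x + y) (x + y) = 1 := by
      rw [div_eq_one_iff_eq h']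
      simp only [map_add, LinearMap.add_apply, hsymm y x, hxy]
      ring
    have hy : B y y ≠ 0 := hxy ▸ hx
    rw [LinearEquiv.trans_apply, hga, e, hka]
    have : x - (1 : K) • (x + y) = -y := by simp
    rw [this, map_neg, mul_neg, neg_div, mul_div_cancel_right₀ _ hy]
    module
  · obtain ⟨g, hg, hgd, hga⟩ := aux_refl B hsymm _ h
    obtain ⟨w, hw, hw0⟩ := aux_perp hd B hsymm hnd x hx
    obtain ⟨k, hk, hkd, hka⟩ := aux_refl B hsymm w hw0
    refine ⟨k.trans g, fun u w => by simp [hk, hg], comp _ _ hkd hgd, ?_⟩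
    have e : 2 * B (x - y) x / B (x - y) (x - y) = 1 := by
      rw [div_eq_one_iff_eq h]
      simp only [map_sub, LinearMap.sub_apply, hsymm y x, hxy]
      ring
    have e2 : k x = x := by rw [hka, hsymm, hw]; simp
    rw [LinearEquiv.trans_apply, e2, hga, e]
    simp

/-- For a nondegenerate symmetric bilinear form `B` on `V = ℚ_p^n`, `n ≥ 3`, and `x` with
`Q(x) = B(x,x) = a ≠ 0`, the orbit of `x` under `SO(V) × ℚ_p^×` (acting by `(g,c)·v = c•(gv)`)
equals `{y : Q(y) ∈ a·(ℚ_p^×)²}`, and this set is open in `V`. -/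
theorem stmt_18 (p : ℕ) [Fact p.Prime] (n : ℕ) (hn : 3 ≤ n)
    (B : LinearMap.BilinForm ℚ_[p] (Fin n → ℚ_[p]))
    (hsymm : ∀ x y, B x y = B y x)
    (hnd : ∀ x, (∀ y, B x y = 0) → x = 0)
    (x : Fin n → ℚ_[p]) (a : ℚ_[p]) (ha : a ≠ 0) (hx : B x x = a) :
    ({y : Fin n → ℚ_[p] |
        ∃ (g : (Fin n → ℚ_[p]) ≃ₗ[ℚ_[p]] (Fin n → ℚ_[p])) (c : ℚ_[p]),
          (∀ u v, B (g u) (g v) = B u v) ∧ LinearMap.det g.toLinearMap = 1 ∧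
          c ≠ 0 ∧ y = c • g x} =
      {y : Fin n → ℚ_[p] | ∃ c : ℚ_[p], c ≠ 0 ∧ B y y = a * c ^ 2}) ∧
    IsOpen {y : Fin n → ℚ_[p] | ∃ c : ℚ_[p], c ≠ 0 ∧ B y y = a * c ^ 2} := by
  constructor
  · ext y
    simp only [Set.mem_ofPred_eq]
    constructor
    · rintro ⟨g, c, hg, -, hc, rfl⟩
      refine ⟨c, hc, ?_⟩
      simp only [map_smul, LinearMap.smul_apply, smul_eq_mul, hg, hx]
      ring
    · rintro ⟨c, hc, h⟩
      obtain ⟨g, hg, hgd, hgx⟩ := aux_trans (by simp; omega) B hsymm hnd x (c⁻¹ • y)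
        (hx ▸ ha) (by
          simp only [map_smul, LinearMap.smul_apply, smul_eq_mul, h, hx]
          field_simp)
      exact ⟨g, c, hg, hgd, hc, by rw [hgx, smul_inv_smul₀ hc]⟩
  · have hcont : Continuous fun y : Fin n → ℚ_[p] => B y y := by
      have : (fun y : Fin n → ℚ_[p] => B y y) = fun y => ∑ i, y i * B (Pi.single i 1) y := by
        funext y
        have h := LinearMap.pi_apply_eq_sum_univ (B y) y
        simp only [smul_eq_mul] at h
        rw [h]
        refine Finset.sum_congr rfl fun i _ => ?_
        rw [hsymm y]
        congr 3
        funext j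
        simp [Pi.single_apply, eq_comm]
      rw [this]
      exact continuous_finsetSum _ fun i _ => (continuous_apply i).mul
        (LinearMap.continuous_of_finiteDimensional _)
    exact (aux_open p a ha).preimage hcont
end
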